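/- For real t ≠ 0, define B(t) = 1/(1 − e^t) + 1/t. Let ξ₁, ξ₂ be real numbers with ξ₁ ≠ 0, ξ₂ ≠ 0, ξ₁ ≠ ξ₂, and ξ₁ + ξ₂ ≠ 0. Then B(−ξ₁)B(−ξ₂) = [B(ξ₂−ξ₁)B(−ξ₂) − (1/ξ₂)(B(−ξ₁) − B(ξ₂−ξ₁)) − (1/(ξ₁−ξ₂))(B(−(ξ₁+ξ₂)/2) − B(−ξ₂))] + [B(ξ₁−ξ₂)B(−ξ₁) − (1/ξ₁)(B(−ξ₂) − B(ξ₁−ξ₂)) − (1/(ξ₂−ξ₁))(B(−(ξ₁+ξ₂)/2) − B(−ξ₁))]. -/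

import Mathlib

/-- The function `B(t) = 1/(1 − e^t) + 1/t`. -/
noncomputable def Bfun (t : ℝ) : ℝ := 1 / (1 - Real.exp t) + 1 / t

/-! The Todd coefficient of a unimodular plane cone is the exponential sum over the lattice points
of the dual cone, minus the exponential integral over the dual cone, minus one term for each
bounding ray. When the cone is subdivided, the sum and the integral are both additive, because the
dual of the subdividing ray is a half-plane, and on a set containing a line both valuations
vanish. The two terms of the subdividing ray cancel, whatever the complement map is. -/

section Field

variable {K : Type*} [Field K]

lemma one_div_one_sub_mul_one_div_one_sub {u v : K} (hu : u ≠ 0) (hv : v ≠ 0) (hu1 : u ≠ 1)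
    (hv1 : v ≠ 1) (huv : u ≠ v) :
    1 / (1 - u) * (1 / (1 - v)) =
      1 / (1 - u / v) * (1 / (1 - v)) + 1 / (1 - v / u) * (1 / (1 - u)) := by
  have hu1' : 1 - u ≠ 0 := sub_ne_zero.2 hu1.symm
  have hv1' : 1 - v ≠ 0 := sub_ne_zero.2 hv1.symm
  have hvu : v - u ≠ 0 := sub_ne_zero.2 huv.symm
  rw [one_sub_div hv, one_sub_div hu, one_div_div, one_div_div, ← neg_sub v u]
  field_simp
  ring

lemma one_div_mul_one_div_eq_add {x y : K} (hx : x ≠ 0) (hy : y ≠ 0) (hxy : x ≠ y) :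
    1 / x * (1 / y) = 1 / (x - y) * (1 / y) + 1 / (y - x) * (1 / x) := by
  have hxy' : x - y ≠ 0 := sub_ne_zero.2 hxy
  rw [← neg_sub x y]
  field_simp
  ring

end Field

/-- The closed form of the exponential sum `∑ₙ e^(-nx)` over the lattice points of a ray, continued
meromorphically from `x > 0` to all real `x ≠ 0`. -/
noncomputable def raySum (x : ℝ) : ℝ := 1 / (1 - Real.exp (-x))

lemma raySum_mul_raySum {x y : ℝ} (hx : x ≠ 0) (hy : y ≠ 0) (hxy : x ≠ y) :
    raySum x * raySum y = raySum (x - y) * raySum y + raySum (y - x) * raySum x := by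
  have exp_neg_sub (s t : ℝ) : Real.exp (-(s - t)) = Real.exp (-s) / Real.exp (-t) := by
    rw [← Real.exp_sub, neg_sub_neg, neg_sub]
  have exp_neg_ne_one {t : ℝ} (ht : t ≠ 0) : Real.exp (-t) ≠ 1 := by
    rwa [Ne, Real.exp_eq_one_iff, neg_eq_zero]
  have exp_neg_ne : Real.exp (-x) ≠ Real.exp (-y) := by
    rwa [Ne, Real.exp_eq_exp, neg_inj]
  simp only [raySum, exp_neg_sub]
  exact one_div_one_sub_mul_one_div_one_sub (Real.exp_ne_zero _) (Real.exp_ne_zero _)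
    (exp_neg_ne_one hx) (exp_neg_ne_one hy) exp_neg_ne

lemma Bfun_neg (x : ℝ) : Bfun (-x) = raySum x - 1 / x := by
  rw [Bfun, raySum, div_neg, ← sub_eq_add_neg]

/-- The Todd coefficient `r^Ψ(σ)`, evaluated at `ξ`, of a plane cone `σ` whose generators `u₁, u₂`
form a lattice basis, by the formula of Proposition 3.3. Here `x, y` are the values at `ξ` of the
basis dual to `u₁, u₂`, and `p, q` are the values at `ξ` of the forms that the complement map `Ψ`
assigns to the rays through `u₁` and `u₂`; for the standard inner product these forms are
`⟨uᵢ, ·⟩ / ⟨uᵢ, uᵢ⟩`. -/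
noncomputable def toddCoeff (x y p q : ℝ) : ℝ :=
  Bfun (-x) * Bfun (-y) - (1 / y) * (Bfun (-p) - Bfun (-x)) - (1 / x) * (Bfun (-q) - Bfun (-y))

lemma toddCoeff_eq_raySum_mul_sub (x y p q : ℝ) :
    toddCoeff x y p q =
      raySum x * raySum y - 1 / x * (1 / y) - 1 / y * Bfun (-p) - 1 / x * Bfun (-q) := by
  rw [toddCoeff, Bfun_neg x, Bfun_neg y]
  ring

-- The cone over `u₁, u₂` is subdivided by the ray through `u₁ + u₂`: the dual basis is
-- `x - y, y` on the half containing `u₁`, and `y - x, x` on the half containing `u₂`.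
theorem todd_coeff_additivity_general {x y : ℝ} (hx : x ≠ 0) (hy : y ≠ 0) (hxy : x ≠ y)
    (p₁ p₂ q : ℝ) :
    toddCoeff x y p₁ p₂ = toddCoeff (x - y) y p₁ q + toddCoeff (y - x) x p₂ q := by
  have sum_additive := raySum_mul_raySum hx hy hxy
  have integral_additive := one_div_mul_one_div_eq_add hx hy hxy
  have ray_terms_cancel : 1 / (x - y) * Bfun (-q) + 1 / (y - x) * Bfun (-q) = 0 := by
    rw [← neg_sub x y, div_neg, neg_mul, add_neg_cancel]
  simp only [toddCoeff_eq_raySum_mul_sub]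
  linear_combination sum_additive - integral_additive + ray_terms_cancel

/-- Additivity of Todd coefficients under the subdivision of `Cone((1,0),(0,1))`
by the diagonal ray through `(1,1)`: `r^Ψ(σ) = r^Ψ(σ₁) + r^Ψ(σ₂)`. -/
theorem todd_coeff_additivity (ξ₁ ξ₂ : ℝ)
    (h1 : ξ₁ ≠ 0) (h2 : ξ₂ ≠ 0) (h12 : ξ₁ ≠ ξ₂) (h12' : ξ₁ + ξ₂ ≠ 0) :
    Bfun (-ξ₁) * Bfun (-ξ₂) =
      (Bfun (ξ₂ - ξ₁) * Bfun (-ξ₂)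
        - (1 / ξ₂) * (Bfun (-ξ₁) - Bfun (ξ₂ - ξ₁))
        - (1 / (ξ₁ - ξ₂)) * (Bfun (-(ξ₁ + ξ₂) / 2) - Bfun (-ξ₂)))
      + (Bfun (ξ₁ - ξ₂) * Bfun (-ξ₁)
        - (1 / ξ₁) * (Bfun (-ξ₂) - Bfun (ξ₁ - ξ₂))
        - (1 / (ξ₂ - ξ₁)) * (Bfun (-(ξ₁ + ξ₂) / 2) - Bfun (-ξ₁))) := by
  simpa only [toddCoeff, neg_sub, neg_div, sub_self, mul_zero, sub_zero] using
    todd_coeff_additivity_general h1 h2 h12 ξ₁ ξ₂ ((ξ₁ + ξ₂) / 2)
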